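/- arXiv:math/0502003 — 2 statements merged into one kernel-verified Lean document; each statement's English description precedes it below -/
import Mathlib

section
/- (Flatness is preserved under deformation, Eq. GEF.8.) Let D be a connection on U whose curvature vanishes identically, i.e. ρ(a,b,c) = 0 for all vector fields a, b, c. Let h : U → V →ₗ[ℝ] V be a smooth map with each h x invertible. Then the curvature of the h-deformation D' of D also vanishes identically. -/
open scoped RealInnerProductSpace

variable {V : Type*} [NormedAddCommGroup V] [InnerProductSpace ℝ V] [FiniteDimensional ℝ V]

/-- A vector field on `U` is a smooth map `U → V`. -/
def IsVectorField (U : Set V) (X : V → V) : Prop := ContDiffOn ℝ (⊤ : ℕ∞) X U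

/-- Directional derivative `(a·∂X)(x) = fderiv ℝ X x (a x)`. -/
noncomputable def dirD (a X : V → V) : V → V := fun x => fderiv ℝ X x (a x)

/-- Lie bracket `[a,b] = a·∂b − b·∂a`. -/
noncomputable def bracket (a b : V → V) : V → V := fun x => dirD a b x - dirD b a x

/-- Smoothness of a connection field `Γ`. -/
def IsConnection (U : Set V) (Γ : V → V →ₗ[ℝ] V →ₗ[ℝ] V) : Prop :=
  ∀ u v : V, ContDiffOn ℝ (⊤ : ℕ∞) (fun x => Γ x u v) U

/-- Covariant derivative associated to the connection field `Γ`. -/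
noncomputable def covD (Γ : V → V →ₗ[ℝ] V →ₗ[ℝ] V) (a X : V → V) : V → V :=
  fun x => fderiv ℝ X x (a x) + Γ x (a x) (X x)

/-- Curvature of an abstract covariant-derivative operator. -/
noncomputable def curvOf (Dop : (V → V) → (V → V) → (V → V)) (a b c : V → V) : V → V :=
  fun x => Dop a (Dop b c) x - Dop b (Dop a c) x - Dop (bracket a b) c x

/-- Curvature field `ρ(a,b,c) = D_a (D_b c) − D_b (D_a c) − D_{[a,b]} c`. -/
noncomputable def curv (Γ : V → V →ₗ[ℝ] V →ₗ[ℝ] V) : (V → V) → (V → V) → (V → V) → V → V :=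
  curvOf (covD Γ)

/-- A metric on `U`: smooth, pointwise self-adjoint and invertible. -/
def IsMetric (U : Set V) (g : V → V →ₗ[ℝ] V) : Prop :=
  (∀ u : V, ContDiffOn ℝ (⊤ : ℕ∞) (fun x => g x u) U) ∧
  ∀ x ∈ U, (∀ u v : V, ⟪g x u, v⟫ = ⟪u, g x v⟫) ∧ Function.Bijective (g x)

/-- Compatibility of an abstract covariant-derivative operator with the metric `g`:
`a·∂(X ·_g Y) = (D_a X) ·_g Y + X ·_g (D_a Y)` on `U`. -/
def CompatibleD (U : Set V) (Dop : (V → V) → (V → V) → (V → V)) (g : V → V →ₗ[ℝ] V) : Prop :=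
  ∀ a X Y : V → V, IsVectorField U a → IsVectorField U X → IsVectorField U Y →
    ∀ x ∈ U, fderiv ℝ (fun y => ⟪g y (X y), Y y⟫) x (a x) =
      ⟪g x (Dop a X x), Y x⟫ + ⟪g x (X x), Dop a Y x⟫

/-- Compatibility of the connection `Γ` with the metric `g`. -/
def Compatible (U : Set V) (Γ : V → V →ₗ[ℝ] V →ₗ[ℝ] V) (g : V → V →ₗ[ℝ] V) : Prop :=
  CompatibleD U (covD Γ) g

/-- The `h`-deformation `D'_a X = h⁻¹·(D_a (h·X))` of the covariant derivative of `Γ`,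
written with an explicit pointwise inverse `hinv` of `h`. -/
noncomputable def deform (Γ : V → V →ₗ[ℝ] V →ₗ[ℝ] V) (h hinv : V → V →ₗ[ℝ] V) :
    (V → V) → (V → V) → V → V :=
  fun a X x => hinv x (covD Γ a (fun y => h y (X y)) x)

/-!
Conjugation by `h` is a gauge transformation: in an iterated derivative `D'_a (D'_b c)` the inner
factor `h · h⁻¹` cancels, not only at `x` but in a neighbourhood of it, so that it also cancels
under the outer derivative. Hence `ρ'(a, b, c) = h⁻¹ · ρ(a, b, h · c)`.
-/

open scoped Topology

section Smoothness

variable {𝕜 E F G : Type*} [NontriviallyNormedField 𝕜] [CompleteSpace 𝕜]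
  [NormedAddCommGroup E] [NormedSpace 𝕜 E] [NormedAddCommGroup F] [NormedSpace 𝕜 F]
  [FiniteDimensional 𝕜 F] [NormedAddCommGroup G] [NormedSpace 𝕜 G]

lemma contDiffOn_linearMap_apply {n : WithTop ℕ∞} {s : Set E} {T : E → F →ₗ[𝕜] G} {f : E → F}
    (hT : ∀ u, ContDiffOn 𝕜 n (fun x => T x u) s) (hf : ContDiffOn 𝕜 n f s) :
    ContDiffOn 𝕜 n (fun x => T x (f x)) s :=
  have hT' : ContDiffOn 𝕜 n (fun x => (T x).toContinuousLinearMap) s :=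
    contDiffOn_clm_apply.2 hT
  hT'.clm_apply hf

end Smoothness

section Deformation

variable {W : Type*} [NormedAddCommGroup W] [InnerProductSpace ℝ W]
  {Γ : W → W →ₗ[ℝ] W →ₗ[ℝ] W} {h hinv : W → W →ₗ[ℝ] W} {x : W}

lemma covD_congr_of_eventuallyEq {X Y : W → W} (hXY : X =ᶠ[𝓝 x] Y) (a : W → W) :
    covD Γ a X x = covD Γ a Y x := by
  simp only [covD, hXY.fderiv_eq, hXY.eq_of_nhds]

lemma deform_deform (hh : ∀ᶠ y in 𝓝 x, Function.RightInverse (hinv y) (h y)) (a b c : W → W) :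
    deform Γ h hinv a (deform Γ h hinv b c) x =
      hinv x (covD Γ a (covD Γ b (fun y => h y (c y))) x) := by
  have hcancel : (fun y => h y (deform Γ h hinv b c y)) =ᶠ[𝓝 x] covD Γ b (fun y => h y (c y)) :=
    hh.mono fun _ hy => hy _
  exact congrArg (hinv x) (covD_congr_of_eventuallyEq hcancel a)

lemma curvOf_deform (hh : ∀ᶠ y in 𝓝 x, Function.RightInverse (hinv y) (h y)) (a b c : W → W) :
    curvOf (deform Γ h hinv) a b c x = hinv x (curv Γ a b (fun y => h y (c y)) x) := by
  simp only [curv, curvOf, deform_deform hh, map_sub]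
  rfl

end Deformation

/-- Eq. (GEF.8): if the curvature of `D` vanishes identically on `U`, then so does the
curvature of the `h`-deformation `D'` of `D`. -/
theorem deformed_flatness
    (U : Set V) (hU : IsOpen U)
    (Γ : V → V →ₗ[ℝ] V →ₗ[ℝ] V) (hΓ : IsConnection U Γ)
    (hflat : ∀ a b c : V → V, IsVectorField U a → IsVectorField U b → IsVectorField U c →
      ∀ x ∈ U, curv Γ a b c x = 0)
    (h hinv : V → V →ₗ[ℝ] V)
    (hsmooth : ∀ u : V, ContDiffOn ℝ (⊤ : ℕ∞) (fun x => h x u) U)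
    (hbij : ∀ x ∈ U, Function.Bijective (h x))
    (hleft : ∀ x ∈ U, ∀ v : V, hinv x (h x v) = v)
    (hright : ∀ x ∈ U, ∀ v : V, h x (hinv x v) = v) :
    ∀ a b c : V → V, IsVectorField U a → IsVectorField U b → IsVectorField U c →
      ∀ x ∈ U, curvOf (deform Γ h hinv) a b c x = 0 := by
  intro a b c ha hb hc x hx
  have hcancel : ∀ᶠ y in 𝓝 x, Function.RightInverse (hinv y) (h y) :=
    Filter.eventually_of_mem (hU.mem_nhds hx) hright
  have hhc : IsVectorField U (fun y => h y (c y)) := contDiffOn_linearMap_apply hsmooth hc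
  rw [curvOf_deform hcancel, hflat a b _ ha hb hhc x hx, map_zero]
end

section
/- (Second Bianchi identity, Eq. LGS.1aa.) Suppose the connection D on U is symmetric, i.e. Γ x u v = Γ x v u for all x ∈ U and u, v ∈ V. Define the covariant derivative of the curvature by (D_dρ)(a,b,c) := D_d (ρ(a,b,c)) − ρ(D_d a, b, c) − ρ(a, D_d b, c) − ρ(a, b, D_d c). Then for all vector fields a, b, c, d on U: (D_dρ)(a,b,c) + (D_aρ)(b,d,c) + (D_bρ)(d,a,c) = 0. -/
/-!
As operators on vector fields, `ρ(a,b) = [D_a, D_b] − D_{[a,b]}`. The Jacobi identities for operator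
commutators and for Lie brackets therefore give, over the cyclic permutations of `(a, b, d)`,
`∑ [D_d, ρ(a,b)] = ∑ ρ([a,b], d)`. By definition `∑ (D_dρ)(a,b,·)` is the left-hand side minus
`∑ ρ(D_a b − D_b a, d)`, so it equals `−∑ ρ(T(a,b), d)` with `T` the torsion, which vanishes for a
symmetric connection.
-/

open scoped RealInnerProductSpace

variable {V : Type*} [NormedAddCommGroup V] [InnerProductSpace ℝ V] [FiniteDimensional ℝ V]

/-- Covariant derivative of the curvature:
`(D_dρ)(a,b,c) = D_d(ρ(a,b,c)) − ρ(D_d a,b,c) − ρ(a,D_d b,c) − ρ(a,b,D_d c)`. -/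
noncomputable def covDCurv (Γ : V → V →ₗ[ℝ] V →ₗ[ℝ] V) (d a b c : V → V) : V → V :=
  fun x => covD Γ d (curv Γ a b c) x - curv Γ (covD Γ d a) b c x
    - curv Γ a (covD Γ d b) c x - curv Γ a b (covD Γ d c) x

section

open Filter Topology

variable {E : Type*} [NormedAddCommGroup E] [InnerProductSpace ℝ E]
  {U : Set E} {Γ : E → E →ₗ[ℝ] E →ₗ[ℝ] E} {a a' b c d X Y : E → E} {x : E}

theorem IsVectorField.contDiffAt (hX : IsVectorField U X) (hU : IsOpen U) (hx : x ∈ U) :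
    ContDiffAt ℝ (⊤ : ℕ∞) X x :=
  ContDiffOn.contDiffAt hX (hU.mem_nhds hx)

theorem IsVectorField.differentiableAt (hX : IsVectorField U X) (hU : IsOpen U) (hx : x ∈ U) :
    DifferentiableAt ℝ X x :=
  (hX.contDiffAt hU hx).differentiableAt (by simp)

protected theorem IsVectorField.sub (hX : IsVectorField U X) (hY : IsVectorField U Y) :
    IsVectorField U (X - Y) :=
  ContDiffOn.sub hX hY

protected theorem IsVectorField.dirD (ha : IsVectorField U a) (hX : IsVectorField U X)
    (hU : IsOpen U) : IsVectorField U (dirD a X) :=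
  (ContDiffOn.fderiv_of_isOpen hX hU (by exact_mod_cast le_top)).clm_apply ha

protected theorem IsVectorField.bracket (ha : IsVectorField U a) (hb : IsVectorField U b)
    (hU : IsOpen U) : IsVectorField U (bracket a b) :=
  (ha.dirD hb hU).sub (hb.dirD ha hU)

theorem bracket_eq_lieBracket (a b : E → E) : bracket a b = VectorField.lieBracket ℝ a b :=
  rfl

theorem bracket_swap (a b : E → E) : bracket a b = -bracket b a :=
  funext fun _ => VectorField.lieBracket_swap

theorem bracket_neg_left (a b : E → E) : bracket (-a) b = -bracket a b := by
  ext x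
  simp only [bracket, dirD, Pi.neg_apply, fderiv_neg, _root_.neg_apply, map_neg]
  abel

theorem bracket_sub_left (ha : DifferentiableAt ℝ a x) (ha' : DifferentiableAt ℝ a' x)
    (b : E → E) : bracket (a - a') b x = bracket a b x - bracket a' b x := by
  simp only [bracket, dirD, Pi.sub_apply, fderiv_sub ha ha', _root_.sub_apply,
    map_sub]
  abel

theorem bracket_jacobi (ha : ContDiffAt ℝ 2 a x) (hb : ContDiffAt ℝ 2 b x)
    (hd : ContDiffAt ℝ 2 d x) :
    bracket (bracket a b) d x + bracket (bracket b d) a x + bracket (bracket d a) b x = 0 := by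
  have leibniz :
      bracket d (bracket a b) x = bracket (bracket d a) b x + bracket a (bracket d b) x :=
    VectorField.leibniz_identity_lieBracket (by simp) hd ha hb
  have swap_twice : bracket (bracket b d) a = bracket a (bracket d b) := by
    rw [bracket_swap b d, bracket_neg_left, ← bracket_swap]
  rw [bracket_swap _ d, swap_twice, Pi.neg_apply, leibniz]
  abel

/-- The covariant differential `v ↦ (D_v X)(x)` of `X` at the point `x`. It exhibits `D_a X` at `x`
as a linear function of the value `a x` alone. -/
noncomputable def covDiff (Γ : E → E →ₗ[ℝ] E →ₗ[ℝ] E) (X : E → E) (x : E) : E →ₗ[ℝ] E :=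
  fderiv ℝ X x + (Γ x).flip (X x)

theorem covD_apply (Γ : E → E →ₗ[ℝ] E →ₗ[ℝ] E) (a X : E → E) (x : E) :
    covD Γ a X x = covDiff Γ X x (a x) :=
  rfl

theorem covD_congr_left (Γ : E → E →ₗ[ℝ] E →ₗ[ℝ] E) (h : a x = a' x) (X : E → E) :
    covD Γ a X x = covD Γ a' X x :=
  congrArg (covDiff Γ X x) h

theorem covD_congr_right (Γ : E → E →ₗ[ℝ] E →ₗ[ℝ] E) (a : E → E) (h : X =ᶠ[𝓝 x] Y) :
    covD Γ a X x = covD Γ a Y x := by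
  simp only [covD, h.fderiv_eq, h.eq_of_nhds]

theorem covD_zero_left (Γ : E → E →ₗ[ℝ] E →ₗ[ℝ] E) (X : E → E) : covD Γ 0 X = 0 :=
  funext fun x => map_zero (covDiff Γ X x)

theorem covD_neg_left (Γ : E → E →ₗ[ℝ] E →ₗ[ℝ] E) (a X : E → E) :
    covD Γ (-a) X = -covD Γ a X :=
  funext fun x => map_neg (covDiff Γ X x) (a x)

theorem covD_sub_left (Γ : E → E →ₗ[ℝ] E →ₗ[ℝ] E) (a a' X : E → E) :
    covD Γ (a - a') X = covD Γ a X - covD Γ a' X :=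
  funext fun x => map_sub (covDiff Γ X x) (a x) (a' x)

theorem covD_zero_right (Γ : E → E →ₗ[ℝ] E →ₗ[ℝ] E) (a : E → E) : covD Γ a 0 = 0 := by
  ext x
  simp [covD]

theorem covD_sub_right (Γ : E → E →ₗ[ℝ] E →ₗ[ℝ] E) (a : E → E) (hX : DifferentiableAt ℝ X x)
    (hY : DifferentiableAt ℝ Y x) : covD Γ a (X - Y) x = covD Γ a X x - covD Γ a Y x := by
  simp only [covD, Pi.sub_apply, fderiv_sub hX hY, _root_.sub_apply, map_sub]
  abel

theorem covD_bracket_jacobi (Γ : E → E →ₗ[ℝ] E →ₗ[ℝ] E) (ha : ContDiffAt ℝ 2 a x)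
    (hb : ContDiffAt ℝ 2 b x) (hd : ContDiffAt ℝ 2 d x) (c : E → E) :
    covD Γ (bracket (bracket a b) d) c x + covD Γ (bracket (bracket b d) a) c x
      + covD Γ (bracket (bracket d a) b) c x = 0 := by
  simp only [covD_apply, ← map_add, bracket_jacobi ha hb hd, map_zero]

theorem curv_eq (Γ : E → E →ₗ[ℝ] E →ₗ[ℝ] E) (a b c : E → E) :
    curv Γ a b c = covD Γ a (covD Γ b c) - covD Γ b (covD Γ a c) - covD Γ (bracket a b) c :=
  rfl

theorem curv_swap (Γ : E → E →ₗ[ℝ] E →ₗ[ℝ] E) (a b c : E → E) :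
    curv Γ a b c = -curv Γ b a c := by
  rw [curv_eq, curv_eq, bracket_swap a b, covD_neg_left]
  abel

theorem curv_zero_left (Γ : E → E →ₗ[ℝ] E →ₗ[ℝ] E) (b c : E → E) : curv Γ 0 b c = 0 := by
  simp only [curv_eq, bracket_eq_lieBracket, VectorField.lieBracket_zero_left, covD_zero_left,
    covD_zero_right, sub_zero]

theorem curv_sub_left (ha : DifferentiableAt ℝ a x) (ha' : DifferentiableAt ℝ a' x) (b : E → E)
    (hac : DifferentiableAt ℝ (covD Γ a c) x) (ha'c : DifferentiableAt ℝ (covD Γ a' c) x) :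
    curv Γ (a - a') b c x = curv Γ a b c x - curv Γ a' b c x := by
  simp only [curv_eq, Pi.sub_apply, covD_sub_left, covD_sub_right Γ b hac ha'c]
  simp only [covD_apply, bracket_sub_left ha ha', map_sub]
  abel

theorem curv_congr_left (Γ : E → E →ₗ[ℝ] E →ₗ[ℝ] E) (h : a =ᶠ[𝓝 x] a') (b c : E → E) :
    curv Γ a b c x = curv Γ a' b c x := by
  have hc : covD Γ a c =ᶠ[𝓝 x] covD Γ a' c := h.mono fun _ hy => covD_congr_left Γ hy c
  have hb : bracket a b x = bracket a' b x := h.lieBracket_vectorField_eq .rfl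
  simp only [curv_eq, Pi.sub_apply, covD_congr_left Γ h.eq_of_nhds, covD_congr_left Γ hb,
    covD_congr_right Γ b hc]

/-- The torsion `T(a,b) = D_a b − D_b a − [a,b]` of the connection `Γ`. -/
noncomputable def torsion (Γ : E → E →ₗ[ℝ] E →ₗ[ℝ] E) (a b : E → E) : E → E :=
  covD Γ a b - covD Γ b a - bracket a b

theorem torsion_apply (Γ : E → E →ₗ[ℝ] E →ₗ[ℝ] E) (a b : E → E) (x : E) :
    torsion Γ a b x = Γ x (a x) (b x) - Γ x (b x) (a x) := by
  simp only [torsion, Pi.sub_apply, covD, bracket, dirD]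
  abel

theorem curv_torsion_eq_zero (hU : IsOpen U) (hx : x ∈ U)
    (hsymm : ∀ y ∈ U, ∀ u v : E, Γ y u v = Γ y v u) (a b c d : E → E) :
    curv Γ (torsion Γ a b) d c x = 0 := by
  have torsion_zero : torsion Γ a b =ᶠ[𝓝 x] 0 := by
    filter_upwards [hU.mem_nhds hx] with y hy
    rw [torsion_apply, hsymm y hy, sub_self, Pi.zero_apply]
  rw [curv_congr_left Γ torsion_zero, curv_zero_left, Pi.zero_apply]

variable [FiniteDimensional ℝ E]

theorem IsConnection.isVectorField_apply (hΓ : IsConnection U Γ) (ha : IsVectorField U a)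
    (hX : IsVectorField U X) : IsVectorField U fun x => Γ x (a x) (X x) := by
  let Γc : E → E →L[ℝ] E →L[ℝ] E := fun x =>
    LinearMap.toContinuousLinearMap (LinearMap.toContinuousLinearMap.toLinearMap ∘ₗ Γ x)
  have hΓc : ContDiffOn ℝ (⊤ : ℕ∞) Γc U :=
    contDiffOn_clm_apply.2 fun u => contDiffOn_clm_apply.2 fun v => hΓ u v
  exact (hΓc.clm_apply ha).clm_apply hX

protected theorem IsVectorField.covD (ha : IsVectorField U a) (hX : IsVectorField U X)
    (hU : IsOpen U) (hΓ : IsConnection U Γ) : IsVectorField U (covD Γ a X) :=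
  ContDiffOn.add (ha.dirD hX hU) (hΓ.isVectorField_apply ha hX)

theorem covD_curv_sub_curv_covD (hU : IsOpen U) (hΓ : IsConnection U Γ)
    (ha : IsVectorField U a) (hb : IsVectorField U b) (hc : IsVectorField U c) (d : E → E)
    (hx : x ∈ U) :
    covD Γ d (curv Γ a b c) x - curv Γ a b (covD Γ d c) x =
      covD Γ d (covD Γ a (covD Γ b c)) x - covD Γ d (covD Γ b (covD Γ a c)) x
        - covD Γ a (covD Γ b (covD Γ d c)) x + covD Γ b (covD Γ a (covD Γ d c)) x
        + curv Γ (bracket a b) d c x + covD Γ (bracket (bracket a b) d) c x := by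
  have hab := ha.covD (hb.covD hc hU hΓ) hU hΓ
  have hba := hb.covD (ha.covD hc hU hΓ) hU hΓ
  have hbr := (ha.bracket hb hU).covD hc hU hΓ
  rw [curv_eq Γ a b c,
    covD_sub_right Γ d ((hab.sub hba).differentiableAt hU hx) (hbr.differentiableAt hU hx),
    covD_sub_right Γ d (hab.differentiableAt hU hx) (hba.differentiableAt hU hx)]
  simp only [curv_eq, Pi.sub_apply]
  abel

theorem cyclic_sum_covD_curv_sub_curv_covD (hU : IsOpen U) (hΓ : IsConnection U Γ)
    (ha : IsVectorField U a) (hb : IsVectorField U b) (hc : IsVectorField U c)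
    (hd : IsVectorField U d) (hx : x ∈ U) :
    (covD Γ d (curv Γ a b c) x - curv Γ a b (covD Γ d c) x)
      + (covD Γ a (curv Γ b d c) x - curv Γ b d (covD Γ a c) x)
      + (covD Γ b (curv Γ d a c) x - curv Γ d a (covD Γ b c) x) =
    curv Γ (bracket a b) d c x + curv Γ (bracket b d) a c x + curv Γ (bracket d a) b c x := by
  have contDiffAt_two {X : E → E} (hX : IsVectorField U X) : ContDiffAt ℝ 2 X x :=
    (hX.contDiffAt hU hx).of_le (WithTop.coe_le_coe.2 le_top)
  rw [covD_curv_sub_curv_covD hU hΓ ha hb hc d hx, covD_curv_sub_curv_covD hU hΓ hb hd hc a hx,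
    covD_curv_sub_curv_covD hU hΓ hd ha hc b hx, ← sub_eq_zero,
    ← covD_bracket_jacobi Γ (contDiffAt_two ha) (contDiffAt_two hb) (contDiffAt_two hd) c]
  abel

theorem curv_torsion (hU : IsOpen U) (hΓ : IsConnection U Γ) (ha : IsVectorField U a)
    (hb : IsVectorField U b) (hc : IsVectorField U c) (d : E → E) (hx : x ∈ U) :
    curv Γ (torsion Γ a b) d c x =
      curv Γ (covD Γ a b) d c x - curv Γ (covD Γ b a) d c x - curv Γ (bracket a b) d c x := by
  have curv_sub {X Y : E → E} (hX : IsVectorField U X) (hY : IsVectorField U Y) :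
      curv Γ (X - Y) d c x = curv Γ X d c x - curv Γ Y d c x :=
    curv_sub_left (hX.differentiableAt hU hx) (hY.differentiableAt hU hx) d
      ((hX.covD hc hU hΓ).differentiableAt hU hx) ((hY.covD hc hU hΓ).differentiableAt hU hx)
  have hab := ha.covD hb hU hΓ
  have hba := hb.covD ha hU hΓ
  rw [torsion, curv_sub (hab.sub hba) (ha.bracket hb hU), curv_sub hab hba]

theorem second_bianchi_general (hU : IsOpen U) (hΓ : IsConnection U Γ)
    (ha : IsVectorField U a) (hb : IsVectorField U b) (hc : IsVectorField U c)
    (hd : IsVectorField U d) (hx : x ∈ U) :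
    covDCurv Γ d a b c x + covDCurv Γ a b d c x + covDCurv Γ b d a c x =
      -(curv Γ (torsion Γ a b) d c x + curv Γ (torsion Γ b d) a c x
        + curv Γ (torsion Γ d a) b c x) := by
  have commutators := cyclic_sum_covD_curv_sub_curv_covD hU hΓ ha hb hc hd hx
  rw [curv_torsion hU hΓ ha hb hc d hx, curv_torsion hU hΓ hb hd hc a hx,
    curv_torsion hU hΓ hd ha hc b hx]
  simp only [covDCurv]
  rw [curv_swap Γ a (covD Γ d b), curv_swap Γ b (covD Γ a d), curv_swap Γ d (covD Γ b a)]
  simp only [Pi.neg_apply]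
  linear_combination (norm := module) commutators

end

/-- Eq. (LGS.1aa): second Bianchi identity for a symmetric connection. -/
theorem second_bianchi
    (U : Set V) (hU : IsOpen U)
    (Γ : V → V →ₗ[ℝ] V →ₗ[ℝ] V) (hΓ : IsConnection U Γ)
    (hsymm : ∀ x ∈ U, ∀ u v : V, Γ x u v = Γ x v u)
    (a b c d : V → V) (ha : IsVectorField U a) (hb : IsVectorField U b)
    (hc : IsVectorField U c) (hd : IsVectorField U d)
    (x : V) (hx : x ∈ U) :
    covDCurv Γ d a b c x + covDCurv Γ a b d c x + covDCurv Γ b d a c x = 0 := by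
  rw [second_bianchi_general hU hΓ ha hb hc hd hx]
  simp only [curv_torsion_eq_zero hU hx hsymm, add_zero, neg_zero]
end
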